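/- Basis lifting for the formal Brieskorn lattice (correctness of the basis representation underlying the normal form algorithm): if m₁,…,m_μ ∈ R are power series whose residue classes form a ℂ-basis of the Milnor algebra R/J(f), then the residue classes of m₁,…,m_μ in H = A/M form a ℂ[[s]]-basis of H; in particular every element of A is congruent modulo M to a unique ℂ[[s]]-linear combination of m₁,…,m_μ. -/

import Mathlib

noncomputable section

open scoped Pointwise

/-- The formal partial derivative `∂ᵢ` with respect to the `i`th variable, determined by
`coeff α (∂ᵢ g) = (α i + 1) • coeff (α + eᵢ) g`. -/
def pd {σ : Type*} (i : σ) (g : MvPowerSeries σ ℂ) : MvPowerSeries σ ℂ :=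
  fun α => ((α i : ℂ) + 1) * MvPowerSeries.coeff (α + Finsupp.single i 1) g

lemma coeff_pd {σ : Type*} (i : σ) (g : MvPowerSeries σ ℂ) (α : σ →₀ ℕ) :
    MvPowerSeries.coeff α (pd i g) =
      ((α i : ℂ) + 1) * MvPowerSeries.coeff (α + Finsupp.single i 1) g := rfl

variable (n : ℕ)

/-- `R = ℂ[[x₁,…,xₙ]]`. -/
abbrev R' := MvPowerSeries (Fin n) ℂ

/-- `A = ℂ[[s,x₁,…,xₙ]]`, where `s` is the 0th variable and `xᵢ` is the variable
of index `i` (`1 ≤ i ≤ n`). -/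
abbrev A' := MvPowerSeries (Fin (n + 1)) ℂ

/-- The variable `s` of `A`. -/
def sv : A' n := MvPowerSeries.X 0

/-- Forget the `s`-exponent of a multi-index of `A`. -/
def tailF (β : Fin (n + 1) →₀ ℕ) : Fin n →₀ ℕ :=
  Finsupp.equivFunOnFinite.symm fun i => β i.succ

/-- The inclusion `R ⊆ A` as the subring of series not involving `s`. -/
def inclR (g : R' n) : A' n :=
  fun β => if β 0 = 0 then MvPowerSeries.coeff (tailF n β) g else 0

/-- The inclusion `ℂ[[s]] ⊆ A` as the subring of series in `s` alone. -/
def toA (p : PowerSeries ℂ) : A' n :=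
  fun β => if tailF n β = 0 then PowerSeries.coeff (β 0) p else 0

lemma coeff_inclR (g : R' n) (β : Fin (n + 1) →₀ ℕ) :
    MvPowerSeries.coeff β (inclR n g) =
      if β 0 = 0 then MvPowerSeries.coeff (tailF n β) g else 0 := rfl

/-- The `ℂ[[s]]`-linear operator `Fᵢ(g) = ∂ᵢ(f)·g − s·∂ᵢ(g)` on `A`. -/
def FF (f : R' n) (i : Fin n) (g : A' n) : A' n :=
  inclR n (pd i f) * g - sv n * pd i.succ g

/-- `M = range F₁ + ⋯ + range Fₙ`, so that `H = A/M` is the formal Brieskorn lattice. -/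
def Mset (f : R' n) : Set (A' n) :=
  {a | ∃ q : Fin n → A' n, a = ∑ i, FF n f i (q i)}

/-- The Jacobian ideal `J(f) = ⟨∂₁f,…,∂ₙf⟩` of `R`. -/
def Jf (f : R' n) : Ideal (R' n) :=
  Ideal.span (Set.range fun i : Fin n => pd i f)

/-- The maximal ideal `⟨x₁,…,xₙ⟩` of `R = ℂ[[x₁,…,xₙ]]`. -/
def mx : Ideal (R' n) :=
  Ideal.span (Set.range (MvPowerSeries.X : Fin n → R' n))

/-- The ideal `J(f)·A` of `A` generated by `∂₁(f),…,∂ₙ(f)`. -/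
def JA (f : R' n) : Ideal (A' n) :=
  Ideal.span (Set.range fun i : Fin n => inclR n (pd i f))

/-- The ideal `⟨x₁,…,xₙ⟩·A` of `A` generated by the variables `x₁,…,xₙ` (not `s`). -/
def XA : Ideal (A' n) :=
  Ideal.span (Set.range fun i : Fin n => (MvPowerSeries.X i.succ : A' n))

lemma pd_add {σ : Type*} (i : σ) (a b : MvPowerSeries σ ℂ) :
    pd i (a + b) = pd i a + pd i b := by
  ext α; simp [coeff_pd, mul_add]

lemma pd_smul {σ : Type*} (i : σ) (c : ℂ) (a : MvPowerSeries σ ℂ) :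
    pd i (c • a) = c • pd i a := by
  ext α; simp [coeff_pd]; ring

lemma FF_add (f : R' n) (i : Fin n) (a b : A' n) :
    FF n f i (a + b) = FF n f i a + FF n f i b := by
  simp only [FF, pd_add, mul_add]; ring

lemma FF_smul (f : R' n) (i : Fin n) (c : ℂ) (a : A' n) :
    FF n f i (c • a) = c • FF n f i a := by
  simp only [FF, pd_smul, Algebra.mul_smul_comm, smul_sub]

lemma FF_zero (f : R' n) (i : Fin n) : FF n f i 0 = 0 := by
  simpa using FF_smul n f i 0 0

/-- `M` as a `ℂ`-submodule of `A`. -/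
def Msub (f : R' n) : Submodule ℂ (A' n) where
  carrier := Mset n f
  zero_mem' := ⟨0, by simp [FF_zero]⟩
  add_mem' := by
    rintro a b ⟨q, rfl⟩ ⟨q', rfl⟩
    exact ⟨q + q', by simp [FF_add, Finset.sum_add_distrib]⟩
  smul_mem' := by
    rintro c a ⟨q, rfl⟩
    exact ⟨c • q, by simp [FF_smul, Finset.smul_sum]⟩

/-- The inclusion `R ⊆ A` as a `ℂ`-linear map. -/
def inclL : R' n →ₗ[ℂ] A' n where
  toFun := inclR n
  map_add' a b := by
    ext β; simp only [coeff_inclR, map_add]; split <;> simp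
  map_smul' c a := by
    ext β; simp only [coeff_inclR, map_smul, RingHom.id_apply]; split <;> simp



/-!
Let `w = (∂₁f, …, ∂ₙf)`. The ideal of `w` contains the regular sequence `x₁ᵐ, …, xₙᵐ`, whose length
is the number of components of `w`, so the Koszul complex of `w` is exact in degree one and every
syzygy of `w` is trivial. The divergence of a trivial syzygy is `∑ wᵢ pᵢ` for a divergence-free
field `p`, because partial derivatives commute; this makes `H = A/M` free of `s`-torsion. As
`H/sH` is the Milnor algebra, a `ℂ`-basis of the latter is linearly independent over `ℂ[[s]]` in
`H`, and successive approximation in powers of `s` shows that it spans.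
-/

section ExactMod

variable {R P₀ P₁ P₂ P₃ : Type*} [CommRing R] [AddCommGroup P₀] [AddCommGroup P₁]
  [AddCommGroup P₂] [AddCommGroup P₃] [Module R P₀] [Module R P₁] [Module R P₂] [Module R P₃]

/-- Exactness of `P₂ → P₁ → P₀` after reduction modulo an ideal `I`, phrased on representatives
in `P₁`. -/
def ExactMod (I : Ideal R) (f : P₂ →ₗ[R] P₁) (g : P₁ →ₗ[R] P₀) : Prop :=
  ∀ c : P₁, g c ∈ I • (⊤ : Submodule R P₀) → c ∈ LinearMap.range f ⊔ I • ⊤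

/-- For a cycle `c` modulo `I`, the element `h₁ c` is a cycle modulo `I + (a)`, so it bounds there;
applying `d₁` to the resulting expression for `h₁ c` and cancelling `a` exhibits `c` as a boundary
modulo `I`. -/
lemma ExactMod.of_sup_span_singleton_of_homotopy {I : Ideal R} {a : R}
    {d₂ : P₃ →ₗ[R] P₂} {d₁ : P₂ →ₗ[R] P₁} {d₀ : P₁ →ₗ[R] P₀} {h₁ : P₁ →ₗ[R] P₂} {h₀ : P₀ →ₗ[R] P₁}
    (hd : ∀ x, d₁ (d₂ x) = 0) (hh : ∀ x, d₁ (h₁ x) = a • x - h₀ (d₀ x))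
    (ha : IsSMulRegular (P₁ ⧸ (I • ⊤ : Submodule R P₁)) a)
    (hexact : ExactMod (I ⊔ Ideal.span {a}) d₂ d₁) : ExactMod I d₁ d₀ := by
  intro c hc
  have hhc : h₀ (d₀ c) ∈ I • (⊤ : Submodule R P₁) := Submodule.smul_top_le_comap_smul_top I h₀ hc
  have hcycle : d₁ (h₁ c) ∈ (I ⊔ Ideal.span {a}) • (⊤ : Submodule R P₁) := by
    rw [hh, Submodule.sup_smul]
    exact sub_mem (Submodule.mem_sup_right <|
      Submodule.smul_mem_smul (Ideal.mem_span_singleton_self a) trivial)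
      (Submodule.mem_sup_left hhc)
  have hbound := hexact _ hcycle
  rw [Submodule.sup_smul, Submodule.ideal_span_singleton_smul] at hbound
  obtain ⟨_, ⟨b, rfl⟩, _, hr, hsum⟩ := Submodule.mem_sup.1 hbound
  obtain ⟨i, hi, _, ⟨e, -, rfl⟩, rfl⟩ := Submodule.mem_sup.1 hr
  have hboundary : d₁ i + a • d₁ e = a • c - h₀ (d₀ c) := by
    simpa only [DistribSMul.toLinearMap_apply, map_add, map_smul, hd, hh, zero_add]
      using congrArg d₁ hsum
  have hsub : a • (c - d₁ e) = d₁ i + h₀ (d₀ c) := by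
    rw [smul_sub, sub_eq_iff_eq_add.1 hboundary.symm]
    abel
  have hdi : d₁ i ∈ I • (⊤ : Submodule R P₁) := Submodule.smul_top_le_comap_smul_top I d₁ hi
  have hmem := mem_of_isSMulRegular_quotient_of_smul_mem ha (hsub ▸ add_mem hdi hhc)
  exact Submodule.mem_sup.2 ⟨_, ⟨e, rfl⟩, _, hmem, add_sub_cancel _ _⟩

end ExactMod

section Koszul

variable {R M : Type*} [CommRing R] [AddCommGroup M] [Module R M]

lemma ι_mul_mem_exteriorPower (v : M) {p : ℕ} {x : ExteriorAlgebra R M} (hx : x ∈ ⋀[R]^p M) :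
    ExteriorAlgebra.ι R v * x ∈ ⋀[R]^(p + 1) M := by
  rw [ExteriorAlgebra.exteriorPower, pow_succ']
  exact Submodule.mul_mem_mul ⟨v, rfl⟩ hx

lemma contractLeft_mem_exteriorPower (d : Module.Dual R M) (p : ℕ) :
    ∀ x ∈ ⋀[R]^(p + 1) M,
      CliffordAlgebra.contractLeft (Q := (0 : QuadraticForm R M)) d x ∈ ⋀[R]^p M := by
  induction p with
  | zero =>
    rw [ExteriorAlgebra.exteriorPower, ExteriorAlgebra.exteriorPower, zero_add, pow_one, pow_zero]
    rintro _ ⟨v, rfl⟩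
    rw [ExteriorAlgebra.ι, CliffordAlgebra.contractLeft_ι]
    exact Submodule.algebraMap_mem _
  | succ p ih =>
    intro x hx
    rw [ExteriorAlgebra.exteriorPower, pow_succ'] at hx
    induction hx using Submodule.mul_induction_on' with
    | mem_mul_mem _ hv y hy =>
      obtain ⟨v, rfl⟩ := hv
      rw [ExteriorAlgebra.ι, CliffordAlgebra.contractLeft_ι_mul]
      exact sub_mem (Submodule.smul_mem _ _ hy) (ι_mul_mem_exteriorPower v (ih y hy))
    | add x _ y _ hx hy => rw [map_add]; exact add_mem hx hy

/-- The Koszul differential `⋀ᵖ⁺¹ M → ⋀ᵖ M` of a linear form `d`: contraction with `d`. -/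
def koszulDifferential (d : Module.Dual R M) (p : ℕ) : ⋀[R]^(p + 1) M →ₗ[R] ⋀[R]^p M :=
  (CliffordAlgebra.contractLeft (Q := (0 : QuadraticForm R M)) d).restrict
    (contractLeft_mem_exteriorPower d p)

/-- Left multiplication by a vector, as a map `⋀ᵖ M → ⋀ᵖ⁺¹ M`; it is the homotopy showing that
`d v` acts by zero on Koszul homology. -/
def wedgeLeft (v : M) (p : ℕ) : ⋀[R]^p M →ₗ[R] ⋀[R]^(p + 1) M :=
  (LinearMap.mulLeft R (ExteriorAlgebra.ι R v)).restrict fun _ => ι_mul_mem_exteriorPower v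

lemma koszulDifferential_koszulDifferential (d : Module.Dual R M) (p : ℕ) (x : ⋀[R]^(p + 2) M) :
    koszulDifferential d p (koszulDifferential d (p + 1) x) = 0 :=
  Subtype.ext (CliffordAlgebra.contractLeft_contractLeft d x.1)

lemma koszulDifferential_wedgeLeft (d : Module.Dual R M) (v : M) (p : ℕ) (x : ⋀[R]^(p + 1) M) :
    koszulDifferential d (p + 1) (wedgeLeft v (p + 1) x) =
      d v • x - wedgeLeft v p (koszulDifferential d p x) :=
  Subtype.ext (CliffordAlgebra.contractLeft_ι_mul (Q := (0 : QuadraticForm R M)) (d := d) v x.1)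

lemma exactMod_koszulDifferential_of_finrank_le [Module.Free R M] [Module.Finite R M]
    (d : Module.Dual R M) {p : ℕ} (hp : Module.finrank R M ≤ p) (I : Ideal R) :
    ExactMod I (koszulDifferential d (p + 1)) (koszulDifferential d p) := by
  have : Subsingleton (⋀[R]^(p + 1) M) := by
    cases subsingleton_or_nontrivial R
    · exact Module.subsingleton R _
    · rw [← Module.finrank_eq_zero_iff_of_free (R := R), exteriorPower.finrank_eq,
        Nat.choose_eq_zero_of_lt (Nat.lt_succ_of_le hp)]
  intro c _
  rw [Subsingleton.elim c 0]
  exact zero_mem _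

open RingTheory.Sequence in
lemma exactMod_bot_koszulDifferential_of_isWeaklyRegular [Module.Free R M] [Module.Finite R M]
    {d : Module.Dual R M} {rs : List R} (hreg : IsWeaklyRegular R rs)
    (hmem : ∀ r ∈ rs, r ∈ LinearMap.range d) (hlen : Module.finrank R M ≤ rs.length) :
    ExactMod ⊥ (koszulDifferential d 1) (koszulDifferential d 0) := by
  suffices H : ∀ k ≤ rs.length, ExactMod (Ideal.ofList (rs.take k))
      (koszulDifferential d (k + 1)) (koszulDifferential d k) by
    simpa using H 0 (Nat.zero_le _)
  intro k hk
  induction hk using Nat.decreasingInduction with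
  | self => exact exactMod_koszulDifferential_of_finrank_le d hlen _
  | of_succ k hk ih =>
    obtain ⟨v, hv⟩ := hmem rs[k] (List.getElem_mem hk)
    have hregk := ((TensorProduct.rid R (⋀[R]^(k + 1) M)).isWeaklyRegular_congr rs).1
      hreg.isWeaklyRegular_lTensor |>.regular_mod_prev k hk
    rw [List.take_succ_eq_append_getElem hk, Ideal.ofList_append, Ideal.ofList_singleton] at ih
    exact .of_sup_span_singleton_of_homotopy (h₁ := wedgeLeft v (k + 1))
      (koszulDifferential_koszulDifferential d (k + 1))
      (fun x => by rw [koszulDifferential_wedgeLeft, hv]) hregk ih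

/-- The submodule of trivial (Koszul) relations of a linear form `d`, written without reference to
a basis. -/
def koszulSyzygies (d : Module.Dual R M) : Submodule R M :=
  Submodule.span R (Set.range fun x : M × M => d x.1 • x.2 - d x.2 • x.1)

lemma koszulDifferential_mem_map_koszulSyzygies (d : Module.Dual R M) (b : ⋀[R]^2 M) :
    (koszulDifferential d 1 b : ExteriorAlgebra R M) ∈
      (koszulSyzygies d).map (ExteriorAlgebra.ι R) := by
  obtain ⟨b, hb⟩ := b
  change CliffordAlgebra.contractLeft (Q := (0 : QuadraticForm R M)) d b ∈ _
  rw [ExteriorAlgebra.exteriorPower, pow_two] at hb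
  induction hb using Submodule.mul_induction_on' with
  | mem_mul_mem _ hv _ hw =>
    obtain ⟨v, rfl⟩ := hv
    obtain ⟨w, rfl⟩ := hw
    refine ⟨d v • w - d w • v, Submodule.subset_span ⟨(v, w), rfl⟩, ?_⟩
    rw [ExteriorAlgebra.ι, CliffordAlgebra.contractLeft_ι_mul, CliffordAlgebra.contractLeft_ι,
      ← Algebra.commutes, ← Algebra.smul_def, map_sub, map_smul, map_smul]
  | add x _ y _ hx hy => rw [map_add]; exact add_mem hx hy

open RingTheory.Sequence in
theorem ker_le_koszulSyzygies_of_isWeaklyRegular [Module.Free R M] [Module.Finite R M]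
    {d : Module.Dual R M} {rs : List R} (hreg : IsWeaklyRegular R rs)
    (hmem : ∀ r ∈ rs, r ∈ LinearMap.range d) (hlen : Module.finrank R M ≤ rs.length) :
    LinearMap.ker d ≤ koszulSyzygies d := by
  intro v hv
  let c : ⋀[R]^1 M := ⟨ExteriorAlgebra.ι R v, by
    rw [ExteriorAlgebra.exteriorPower, pow_one]; exact ⟨v, rfl⟩⟩
  have hc : koszulDifferential d 0 c = 0 := Subtype.ext <|
    (CliffordAlgebra.contractLeft_ι (Q := (0 : QuadraticForm R M)) d v).trans <| by
      rw [LinearMap.mem_ker.1 hv, map_zero]; rfl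
  have hrange :=
    exactMod_bot_koszulDifferential_of_isWeaklyRegular hreg hmem hlen c (hc ▸ zero_mem _)
  rw [Submodule.bot_smul, sup_bot_eq] at hrange
  obtain ⟨b, hb⟩ := hrange
  obtain ⟨u, hu, huv⟩ := koszulDifferential_mem_map_koszulSyzygies d b
  rw [hb] at huv
  exact ExteriorAlgebra.ι_inj R u v |>.1 huv ▸ hu

lemma koszulSyzygies_eq_span_basis {ι : Type*} (b : Module.Basis ι R M)
    (d : Module.Dual R M) :
    koszulSyzygies d =
      Submodule.span R (Set.range fun x : ι × ι => d (b x.1) • b x.2 - d (b x.2) • b x.1) := by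
  let B : M →ₗ[R] M →ₗ[R] M := (LinearMap.lsmul R M).comp d - ((LinearMap.lsmul R M).comp d).flip
  have hB : Submodule.map₂ B ⊤ ⊤ ≤
      Submodule.span R (Set.range fun x : ι × ι => d (b x.1) • b x.2 - d (b x.2) • b x.1) := by
    rw [← b.span_eq, Submodule.map₂_span_span, Submodule.span_le]
    rintro _ ⟨_, ⟨i, rfl⟩, _, ⟨j, rfl⟩, rfl⟩
    exact Submodule.subset_span ⟨(i, j), rfl⟩
  refine le_antisymm (Submodule.span_le.2 ?_) (Submodule.span_mono ?_)
  · rintro _ ⟨⟨v, w⟩, rfl⟩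
    exact hB (Submodule.apply_mem_map₂ B (m := v) (n := w) trivial trivial)
  · rintro _ ⟨⟨i, j⟩, rfl⟩
    exact ⟨(b i, b j), rfl⟩

end Koszul

section TrivialSyzygies

open MvPowerSeries RingTheory.Sequence

variable {σ k : Type*} [CommRing k]

lemma mem_span_X_pow_image_iff (e : σ → ℕ) (s : Finset σ) (g : MvPowerSeries σ k) :
    g ∈ Ideal.span ((fun i => (X i : MvPowerSeries σ k) ^ e i) '' s) ↔
      ∀ α : σ →₀ ℕ, (∀ i ∈ s, α i < e i) → coeff α g = 0 := by
  classical
  induction s using Finset.induction_on generalizing g with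
  | empty => simp [MvPowerSeries.ext_iff]
  | insert a s _ ih =>
    rw [Finset.coe_insert, Set.image_insert_eq, Ideal.span_insert, Submodule.mem_sup]
    refine ⟨?_, fun hg => ?_⟩
    · rintro ⟨u, hu, v, hv, rfl⟩ α hα
      rw [map_add, X_pow_dvd_iff.1 (Ideal.mem_span_singleton.1 hu) α (hα a (s.mem_insert_self a)),
        (ih v).1 hv α fun i hi => hα i (Finset.mem_insert_of_mem hi), add_zero]
    · let v : MvPowerSeries σ k := fun α => if α a < e a then coeff α g else 0
      have coeff_v (α) : coeff α v = if α a < e a then coeff α g else 0 := rfl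
      refine ⟨g - v, Ideal.mem_span_singleton.2 (X_pow_dvd_iff.2 fun α hα => ?_),
        v, (ih v).2 fun α hα => ?_, sub_add_cancel g v⟩
      · rw [map_sub, coeff_v, if_pos hα, sub_self]
      · rw [coeff_v]
        split_ifs with ha
        · exact hg α ((Finset.forall_mem_insert _ _ _).2 ⟨ha, hα⟩)
        · rfl

lemma isWeaklyRegular_map_X_pow (e : σ → ℕ) {l : List σ} (hl : l.Nodup) :
    IsWeaklyRegular (MvPowerSeries σ k) (l.map fun i => (X i : MvPowerSeries σ k) ^ e i) := by
  classical
  refine ⟨fun j hj => ?_⟩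
  rw [List.length_map] at hj
  have hset : {r | r ∈ (l.map fun i => (X i : MvPowerSeries σ k) ^ e i).take j} =
      (fun i => X i ^ e i) '' ((l.take j).toFinset : Set σ) := by
    ext r
    simp only [← List.map_take, List.mem_map, Set.mem_ofPred_eq, Set.mem_image, Finset.mem_coe,
      List.mem_toFinset]
  rw [isSMulRegular_quotient_iff_mem_of_smul_mem, smul_eq_mul, Ideal.mul_top, Ideal.ofList, hset]
  intro g hg
  rw [mem_span_X_pow_image_iff] at hg ⊢
  intro α hα
  have hshift := hg (Finsupp.single l[j] (e l[j]) + α) fun i hi => by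
    have hne : l[j] ≠ i := by
      rintro rfl
      obtain ⟨j', hj', heq⟩ := List.mem_take_iff_getElem.1 (List.mem_toFinset.1 hi)
      have := (hl.getElem_inj_iff).1 heq
      omega
    simpa only [Finsupp.add_apply, Finsupp.single_eq_of_ne' hne, zero_add] using hα i hi
  rwa [List.getElem_map, smul_eq_mul, X_pow_eq, coeff_add_monomial_mul, one_mul] at hshift

theorem ker_linearCombination_le_koszulSyzygies_of_X_pow_mem [Fintype σ] [Nontrivial k]
    {w : σ → MvPowerSeries σ k} (e : σ → ℕ) (hw : ∀ i, X i ^ e i ∈ Ideal.span (Set.range w)) :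
    LinearMap.ker (Fintype.linearCombination (MvPowerSeries σ k) w) ≤
      koszulSyzygies (Fintype.linearCombination (MvPowerSeries σ k) w) := by
  refine ker_le_koszulSyzygies_of_isWeaklyRegular
    (isWeaklyRegular_map_X_pow e Finset.univ.nodup_toList) ?_ ?_
  · simpa only [Fintype.range_linearCombination, List.forall_mem_map] using fun i _ => hw i
  · rw [Module.finrank_fintype_fun_eq_card, List.length_map, Finset.length_toList, Finset.card_univ]

lemma pderiv_comm (i j : σ) (g : MvPowerSeries σ k) :
    pderiv k i (pderiv k j g) = pderiv k j (pderiv k i g) := by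
  classical
  ext α
  rcases eq_or_ne i j with rfl | hij
  · rfl
  · simp only [coeff_pderiv, add_right_comm α (Finsupp.single i 1), Finsupp.add_apply,
      Finsupp.single_eq_of_ne hij, Finsupp.single_eq_of_ne' hij, add_zero]
    ring

end TrivialSyzygies

section BrieskornLattice

open PowerSeries

variable {k S ι κ : Type*} [CommRing k] [CommRing S] [Algebra k S] [Fintype ι] [Fintype κ]

/-- The map on power series applying a linear map to each coefficient. -/
def coeffwise (L : S →ₗ[k] S) : S⟦X⟧ →ₗ[k] S⟦X⟧ where
  toFun p := mk fun n => L (coeff n p)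
  map_add' p q := by ext n; simp only [coeff_mk, map_add]
  map_smul' a p := by ext n; simp only [coeff_mk, coeff_smul, map_smul, RingHom.id_apply]

@[simp]
lemma coeff_coeffwise (L : S →ₗ[k] S) (p : S⟦X⟧) (n : ℕ) :
    coeff n (coeffwise L p) = L (coeff n p) :=
  coeff_mk n fun n => L (coeff n p)

@[simp]
lemma coeffwise_C (L : S →ₗ[k] S) (a : S) : coeffwise L (C a) = C (L a) := by
  ext n
  rw [coeff_coeffwise, coeff_C, coeff_C, apply_ite L, map_zero]

@[simp]
lemma coeffwise_X_mul (L : S →ₗ[k] S) (p : S⟦X⟧) :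
    coeffwise L (X * p) = X * coeffwise L p := by
  ext (_ | n)
  · rw [coeff_coeffwise, coeff_zero_X_mul, coeff_zero_X_mul, map_zero]
  · rw [coeff_coeffwise, coeff_succ_X_mul, coeff_succ_X_mul, coeff_coeffwise]

/-- The divergence of a vector field `q` with respect to derivations `D i`. -/
def divergence (D : ι → Derivation k S S) : (ι → S) →ₗ[k] S :=
  ∑ i, (D i : S →ₗ[k] S) ∘ₗ LinearMap.proj i

lemma divergence_apply (D : ι → Derivation k S S) (q : ι → S) :
    divergence D q = ∑ i, D i (q i) := by
  simp only [divergence, LinearMap.sum_apply, LinearMap.comp_apply, LinearMap.proj_apply,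
    Derivation.coeFn_coe]

/-- The operator `q ↦ ∑ i, (w i * q i - X * D i (q i))` on vector fields over `S⟦X⟧`. For
`w = (∂₁f, …, ∂ₙf)` and `D = (∂₁, …, ∂ₙ)` its cokernel is the Brieskorn lattice of `f`. -/
def twistedDiv (D : ι → Derivation k S S) (w : ι → S) : (ι → S⟦X⟧) →ₗ[k] S⟦X⟧ :=
  ∑ i, (LinearMap.mulLeft k (C (w i)) - LinearMap.mulLeft k X ∘ₗ coeffwise (D i : S →ₗ[k] S)) ∘ₗ
    LinearMap.proj i

variable (D : ι → Derivation k S S) (w : ι → S)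

lemma twistedDiv_apply (q : ι → S⟦X⟧) :
    twistedDiv D w q = ∑ i, (C (w i) * q i - X * coeffwise (D i : S →ₗ[k] S) (q i)) := by
  simp only [twistedDiv, LinearMap.sum_apply, LinearMap.comp_apply, LinearMap.sub_apply,
    LinearMap.mulLeft_apply, LinearMap.proj_apply]

lemma twistedDiv_C (q : ι → S) :
    twistedDiv D w (fun i => C (q i)) =
      C (Fintype.linearCombination S w q) - X * C (divergence D q) := by
  simp only [twistedDiv_apply, Fintype.linearCombination_apply, divergence_apply, coeffwise_C,
    Derivation.coeFn_coe, smul_eq_mul, Finset.sum_sub_distrib, map_sum, map_mul, Finset.mul_sum,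
    mul_comm]

lemma twistedDiv_X_mul (q : ι → S⟦X⟧) :
    twistedDiv D w (fun i => X * q i) = X * twistedDiv D w q := by
  simp only [twistedDiv_apply, coeffwise_X_mul, Finset.mul_sum, mul_sub, mul_left_comm X]

lemma coeff_zero_twistedDiv (q : ι → S⟦X⟧) :
    coeff 0 (twistedDiv D w q) = Fintype.linearCombination S w fun i => coeff 0 (q i) := by
  simp only [twistedDiv_apply, map_sum, map_sub, coeff_C_mul, coeff_zero_X_mul, sub_zero,
    Fintype.linearCombination_apply, smul_eq_mul, mul_comm (w _)]

lemma coeff_succ_twistedDiv (q : ι → S⟦X⟧) (n : ℕ) :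
    coeff (n + 1) (twistedDiv D w q) =
      Fintype.linearCombination S w (fun i => coeff (n + 1) (q i)) -
        divergence D fun i => coeff n (q i) := by
  simp only [twistedDiv_apply, map_sum, map_sub, coeff_C_mul, coeff_succ_X_mul, coeff_coeffwise,
    Fintype.linearCombination_apply, divergence_apply, Derivation.coeFn_coe, smul_eq_mul,
    Finset.sum_sub_distrib, mul_comm (w _)]

variable {D w}

/-- For `q = r (wᵢ eⱼ - wⱼ eᵢ)`, closedness of `w` turns the divergence into `wᵢ Dⱼ r - wⱼ Dᵢ r`,
and `Dⱼ r eᵢ - Dᵢ r eⱼ` is divergence free because `Dᵢ` and `Dⱼ` commute. -/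
lemma divergence_mem_map_ker_of_mem_koszulSyzygies
    (hD : ∀ i j x, D i (D j x) = D j (D i x)) (hw : ∀ i j, D i (w j) = D j (w i))
    {q : ι → S} (hq : q ∈ koszulSyzygies (Fintype.linearCombination S w)) :
    divergence D q ∈
      (LinearMap.ker (divergence D)).map ((Fintype.linearCombination S w).restrictScalars k) := by
  classical
  have hdiv (i : ι) (r : S) : divergence D (Pi.single i r) = D i r := by
    rw [divergence_apply, Finset.sum_eq_single_of_mem i (Finset.mem_univ i) fun j _ hj => by
      rw [Pi.single_eq_of_ne hj, map_zero], Pi.single_eq_same]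
  rw [koszulSyzygies_eq_span_basis (Pi.basisFun S ι)] at hq
  induction hq using Submodule.closure_induction with
  | zero => rw [map_zero]; exact zero_mem _
  | add x y _ _ hx hy => rw [map_add]; exact add_mem hx hy
  | smul_mem r x hx =>
    obtain ⟨⟨i, j⟩, rfl⟩ := hx
    refine ⟨Pi.single i (D j r) - Pi.single j (D i r), ?_, ?_⟩
    · rw [SetLike.mem_coe, LinearMap.mem_ker, map_sub, hdiv, hdiv, hD, sub_self]
    · simp only [Pi.basisFun_apply, Fintype.linearCombination_apply_single,
        LinearMap.restrictScalars_apply, map_sub, smul_sub, ← Pi.single_smul, hdiv, smul_eq_mul,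
        one_mul, mul_one, Derivation.leibniz, hw j i]
      ring

/-- Splitting `q = C q₀ + X q'`, the constant term of the hypothesis makes `q₀` a syzygy of `w`.
Its divergence is absorbed by `twistedDiv D w (C p)` with `p` divergence free. -/
lemma mem_range_twistedDiv_of_X_mul_mem
    (hD : ∀ i j x, D i (D j x) = D j (D i x)) (hw : ∀ i j, D i (w j) = D j (w i))
    (hsyz : LinearMap.ker (Fintype.linearCombination S w) ≤
      koszulSyzygies (Fintype.linearCombination S w))
    {a : S⟦X⟧} (ha : X * a ∈ LinearMap.range (twistedDiv D w)) :
    a ∈ LinearMap.range (twistedDiv D w) := by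
  obtain ⟨q, hq⟩ := ha
  let q₀ : ι → S := fun i => coeff 0 (q i)
  let q' : ι → S⟦X⟧ := fun i => mk fun n => coeff (n + 1) (q i)
  have hq₀ : Fintype.linearCombination S w q₀ = 0 :=
    (coeff_zero_twistedDiv D w q).symm.trans <| by rw [hq, coeff_zero_X_mul]
  have hsplit : q = (fun i => X * q' i) + fun i => C (q₀ i) := by
    funext i
    change q i = X * q' i + C (coeff 0 (q i))
    rw [coeff_zero_eq_constantCoeff_apply]
    exact eq_X_mul_shift_add_const (q i)
  have ha : a = twistedDiv D w q' - C (divergence D q₀) := by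
    apply X_mul_cancel
    rw [← hq, hsplit, map_add, twistedDiv_X_mul, twistedDiv_C, hq₀, map_zero, mul_sub]
    ring
  obtain ⟨p, hp, hpq⟩ := divergence_mem_map_ker_of_mem_koszulSyzygies hD hw (hsyz hq₀)
  refine ⟨q' - fun i => C (p i), ?_⟩
  rw [map_sub, twistedDiv_C, LinearMap.mem_ker.1 hp, map_zero, mul_zero, sub_zero, ha, ← hpq,
    LinearMap.restrictScalars_apply]

lemma coeff_sum_smul_C (c : κ → k⟦X⟧) (b : κ → S) (n : ℕ) :
    coeff n (∑ i, c i • (C (b i) : S⟦X⟧)) = ∑ i, coeff n (c i) • b i := by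
  simp only [map_sum, Algebra.smul_def, algebraMap_apply'', coeff_mul_C, coeff_map]

variable (D) in
/-- Successive approximation in powers of `X`: the error `G n` left over in degree `n` is reduced
modulo `w`, which contributes the divergence of the chosen coefficients in degree `n + 1`. -/
lemma exists_sub_sum_smul_C_mem_range_twistedDiv {b : κ → S}
    (hb : ∀ g, ∃ c : κ → k, g - ∑ i, c i • b i ∈ Ideal.span (Set.range w)) (p : S⟦X⟧) :
    ∃ c : κ → k⟦X⟧, p - ∑ i, c i • C (b i) ∈ LinearMap.range (twistedDiv D w) := by
  simp only [← Fintype.range_linearCombination, LinearMap.mem_range] at hb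
  choose c q hcq using hb
  let G : ℕ → S := fun n =>
    n.rec (coeff 0 p) fun n g => coeff (n + 1) p + divergence D (q g)
  refine ⟨fun i => mk fun n => c (G n) i, fun i => mk fun n => q (G n) i, ?_⟩
  ext (_ | n)
  · simp only [coeff_zero_twistedDiv, map_sub, coeff_sum_smul_C, coeff_mk]
    exact hcq (coeff 0 p)
  · simp only [coeff_succ_twistedDiv, map_sub, coeff_sum_smul_C, coeff_mk]
    rw [hcq (G (n + 1)), sub_right_comm]
    congr 1
    exact add_sub_cancel_right _ _

lemma eq_zero_of_sum_smul_C_mem_range_twistedDiv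
    (hD : ∀ i j x, D i (D j x) = D j (D i x)) (hw : ∀ i j, D i (w j) = D j (w i))
    (hsyz : LinearMap.ker (Fintype.linearCombination S w) ≤
      koszulSyzygies (Fintype.linearCombination S w))
    {b : κ → S} (hb : ∀ c : κ → k, ∑ i, c i • b i ∈ Ideal.span (Set.range w) → c = 0)
    {c : κ → k⟦X⟧} (hc : ∑ i, c i • C (b i) ∈ LinearMap.range (twistedDiv D w)) : c = 0 := by
  suffices H : ∀ n, (fun i => coeff n (c i)) = 0 from
    funext fun i => PowerSeries.ext fun n => congrFun (H n) i
  intro n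
  have hc₀ {c : κ → k⟦X⟧} (hc : ∑ i, c i • C (b i) ∈ LinearMap.range (twistedDiv D w)) :
      (fun i => coeff 0 (c i)) = 0 := by
    obtain ⟨q, hq⟩ := hc
    apply hb
    rw [← coeff_sum_smul_C, ← hq, coeff_zero_twistedDiv, Ideal.span,
      ← Fintype.range_linearCombination]
    exact ⟨_, rfl⟩
  induction n generalizing c with
  | zero => exact hc₀ hc
  | succ n ih =>
    choose c' hc' using fun i => X_dvd_iff.2 <|
      (coeff_zero_eq_constantCoeff_apply (c i)).symm.trans (congrFun (hc₀ hc) i)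
    have hX : ∑ i, c i • (C (b i) : S⟦X⟧) = X * ∑ i, c' i • C (b i) := by
      simp only [hc', Finset.mul_sum, Algebra.smul_def, algebraMap_apply'', map_mul, map_X,
        mul_assoc]
    have hc'₀ := ih (mem_range_twistedDiv_of_X_mul_mem hD hw hsyz (hX ▸ hc))
    simpa only [hc', coeff_succ_X_mul] using hc'₀

theorem existsUnique_sub_sum_smul_C_mem_range_twistedDiv
    (hD : ∀ i j x, D i (D j x) = D j (D i x)) (hw : ∀ i j, D i (w j) = D j (w i))
    (hsyz : LinearMap.ker (Fintype.linearCombination S w) ≤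
      koszulSyzygies (Fintype.linearCombination S w))
    {b : κ → S} (hb : ∀ g, ∃! c : κ → k, g - ∑ i, c i • b i ∈ Ideal.span (Set.range w))
    (p : S⟦X⟧) :
    ∃! c : κ → k⟦X⟧, p - ∑ i, c i • C (b i) ∈ LinearMap.range (twistedDiv D w) := by
  obtain ⟨c, hc⟩ := exists_sub_sum_smul_C_mem_range_twistedDiv D (fun g => (hb g).exists) p
  have hindep (c : κ → k) (hc : ∑ i, c i • b i ∈ Ideal.span (Set.range w)) : c = 0 :=
    (hb 0).unique (by simpa only [zero_sub] using neg_mem hc)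
      (by simp only [Pi.zero_apply, zero_smul, Finset.sum_const_zero, sub_zero, zero_mem])
  refine ⟨c, hc, fun c' hc' => sub_eq_zero.1 ?_⟩
  apply eq_zero_of_sum_smul_C_mem_range_twistedDiv hD hw hsyz hindep
  simpa only [Pi.sub_apply, sub_smul, Finset.sum_sub_distrib, sub_sub_sub_cancel_left]
    using sub_mem hc hc'

end BrieskornLattice

section FormalBrieskornLattice

open PowerSeries

variable {n}

lemma pd_eq_pderiv {σ : Type*} (i : σ) (g : MvPowerSeries σ ℂ) :
    pd i g = MvPowerSeries.pderiv ℂ i g := by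
  ext α
  rw [coeff_pd, MvPowerSeries.coeff_pderiv, mul_comm]

lemma tailF_cons (a : ℕ) (α : Fin n →₀ ℕ) : tailF n (α.cons a) = α := by
  ext i
  rw [tailF, Finsupp.coe_equivFunOnFinite_symm, Finsupp.cons_succ]

lemma finSuccEquiv_inclR (g : R' n) : MvPowerSeries.finSuccEquiv ℂ n (inclR n g) = C g := by
  ext a α
  rw [MvPowerSeries.coeff_coeff_finSuccEquiv, coeff_inclR, tailF_cons, coeff_C, Finsupp.cons_zero]
  split_ifs
  · rfl
  · rw [map_zero]

lemma finSuccEquiv_toA (p : ℂ⟦X⟧) :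
    MvPowerSeries.finSuccEquiv ℂ n (toA n p) = algebraMap ℂ⟦X⟧ (R' n)⟦X⟧ p := by
  classical
  ext a α
  rw [MvPowerSeries.coeff_coeff_finSuccEquiv, algebraMap_apply'', coeff_map,
    MvPowerSeries.algebraMap_apply, Algebra.algebraMap_self, RingHom.id_apply,
    MvPowerSeries.coeff_C]
  change (if tailF n (α.cons a) = 0 then coeff ((α.cons a) 0) p else 0) = _
  rw [tailF_cons, Finsupp.cons_zero]

lemma finSuccEquiv_pd_succ (i : Fin n) (g : A' n) :
    MvPowerSeries.finSuccEquiv ℂ n (pd i.succ g) =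
      coeffwise (MvPowerSeries.pderiv ℂ i : R' n →ₗ[ℂ] R' n)
        (MvPowerSeries.finSuccEquiv ℂ n g) := by
  ext a α
  have hcons : (α.cons a : Fin (n + 1) →₀ ℕ) + Finsupp.single i.succ 1 =
      (α + Finsupp.single i 1).cons a := by
    ext j
    refine Fin.cases ?_ (fun j => ?_) j
    · simp
    · simp [Finsupp.single_apply]
  rw [coeff_coeffwise, Derivation.coeFn_coe, MvPowerSeries.coeff_coeff_finSuccEquiv, coeff_pd,
    MvPowerSeries.coeff_pderiv, MvPowerSeries.coeff_coeff_finSuccEquiv, Finsupp.cons_succ, hcons,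
    mul_comm]

lemma finSuccEquiv_sum_FF (f : R' n) (q : Fin n → A' n) :
    MvPowerSeries.finSuccEquiv ℂ n (∑ i, FF n f i (q i)) =
      twistedDiv (MvPowerSeries.pderiv ℂ) (fun i => pd i f)
        fun i => MvPowerSeries.finSuccEquiv ℂ n (q i) := by
  simp only [FF, sv, map_sum, map_sub, map_mul, finSuccEquiv_inclR, finSuccEquiv_pd_succ,
    MvPowerSeries.finSuccEquiv_X_zero, twistedDiv_apply]

lemma mem_Mset_iff (f : R' n) (a : A' n) :
    a ∈ Mset n f ↔ MvPowerSeries.finSuccEquiv ℂ n a ∈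
      LinearMap.range (twistedDiv (MvPowerSeries.pderiv ℂ) fun i => pd i f) := by
  constructor
  · rintro ⟨q, rfl⟩
    exact ⟨_, (finSuccEquiv_sum_FF f q).symm⟩
  · rintro ⟨q, hq⟩
    refine ⟨fun i => (MvPowerSeries.finSuccEquiv ℂ n).symm (q i),
      (MvPowerSeries.finSuccEquiv ℂ n).injective ?_⟩
    simp only [finSuccEquiv_sum_FF, AlgEquiv.apply_symm_apply, hq]

end FormalBrieskornLattice

/-- **Basis lifting for the formal Brieskorn lattice**: if `m₁,…,m_μ ∈ R` are power
series whose residue classes form a `ℂ`-basis of the Milnor algebra `R/J(f)`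
(i.e. every `g ∈ R` is congruent modulo `J(f)` to a unique `ℂ`-linear combination
of the `mᵢ`), then their residue classes in `H = A/M` form a `ℂ[[s]]`-basis of `H`:
every element of `A` is congruent modulo `M` to a unique `ℂ[[s]]`-linear
combination of `m₁,…,m_μ`. -/
theorem brieskorn_basis_lifting (n : ℕ) (hn : 1 ≤ n) (f : R' n)
    (hf0 : MvPowerSeries.constantCoeff f = 0)
    (m : ℕ) (hm : 1 ≤ m) (hiso : mx n ^ m ≤ Jf n f)
    (μ : ℕ) (mb : Fin μ → R' n)
    (hbasis : ∀ g : R' n, ∃! c : Fin μ → ℂ, g - ∑ i, c i • mb i ∈ Jf n f) :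
    ∀ p : A' n, ∃! c : Fin μ → PowerSeries ℂ,
      p - ∑ i, toA n (c i) * inclR n (mb i) ∈ Mset n f := by
  intro p
  have hclosed (i j : Fin n) :
      MvPowerSeries.pderiv ℂ i (pd j f) = MvPowerSeries.pderiv ℂ j (pd i f) := by
    rw [pd_eq_pderiv, pd_eq_pderiv, pderiv_comm]
  have hXm (i : Fin n) : MvPowerSeries.X i ^ m ∈ Jf n f :=
    hiso (Ideal.pow_mem_pow (Ideal.subset_span (Set.mem_range_self i)) m)
  have hsyz := ker_linearCombination_le_koszulSyzygies_of_X_pow_mem (fun _ => m) hXm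
  simpa only [mem_Mset_iff, map_sub, map_sum, map_mul, finSuccEquiv_toA, finSuccEquiv_inclR,
    ← Algebra.smul_def] using existsUnique_sub_sum_smul_C_mem_range_twistedDiv pderiv_comm
      hclosed hsyz hbasis (MvPowerSeries.finSuccEquiv ℂ n p)
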